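/- Let φ and ψ be LTL-formulas, let ρ be the set of propositional variables occurring in both φ and ψ, let q_1,…,q_m be the variables of φ not in ρ, and r_1,…,r_k the variables of ψ not in ρ. Let A_ρ = 2^ρ, identify each ρ-model with a word over A_ρ, and set L_φ = {ρ-models M : M,0 ⊨ ∃q_1…∃q_m φ} and L_¬ψ = {ρ-models M : M,0 ⊨ ∃r_1…∃r_k ¬ψ}. Then φ and ψ have a Craig interpolant in LTL if and only if L_φ and L_¬ψ are separable by an FO(<)-definable language over the alphabet A_ρ (i.e., there is an FO(<)-definable L ⊆ A_ρ⁺ with L_φ ⊆ L and L_¬ψ ∩ L = ∅). -/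

import Mathlib

open FirstOrder

/-! ### LTL over finite timelines -/

/-- LTL-formulas over propositional variables indexed by `ℕ`. -/
inductive LTL : Type
  | top : LTL
  | var : ℕ → LTL
  | and : LTL → LTL → LTL
  | not : LTL → LTL
  | next : LTL → LTL
  | ev : LTL → LTL
  | untl : LTL → LTL → LTL

/-- The propositional variables occurring in an LTL-formula. -/
def LTL.vars : LTL → Set ℕ
  | .top => ∅
  | .var p => {p}
  | .and φ ψ => φ.vars ∪ ψ.vars
  | .not φ => φ.vars
  | .next φ => φ.vars
  | .ev φ => φ.vars
  | .untl φ ψ => φ.vars ∪ ψ.vars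

/-- A finite temporal model `({0,…,ℓ}, <, V)`. -/
structure TModel : Type where
  len : ℕ
  V : ℕ → ℕ → Prop

/-- Truth of an LTL-formula at a time point of a finite temporal model. -/
def LTL.sat (M : TModel) : ℕ → LTL → Prop
  | _, .top => True
  | n, .var p => M.V p n
  | n, .and φ ψ => LTL.sat M n φ ∧ LTL.sat M n ψ
  | n, .not φ => ¬ LTL.sat M n φ
  | n, .next φ => n < M.len ∧ LTL.sat M (n + 1) φ
  | n, .ev φ => ∃ m, n < m ∧ m ≤ M.len ∧ LTL.sat M m φ
  | n, .untl φ ψ => ∃ m, n < m ∧ m ≤ M.len ∧ LTL.sat M m φ ∧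
      ∀ k, n < k → k < m → LTL.sat M k ψ

/-- Entailment in LTL over finite timelines. -/
def LTLEntails (φ ψ : LTL) : Prop :=
  ∀ M : TModel, LTL.sat M 0 φ → LTL.sat M 0 ψ

/-- `M,0 ⊨ ∃q₁…∃q_m χ`, where `q₁,…,q_m` enumerate the variables in `Q`: some model
differing from `M` at most on the variables in `Q` (and with the same timeline)
satisfies `χ` at `0`. -/
def SatEx (Q : Set ℕ) (M : TModel) (χ : LTL) : Prop :=
  ∃ M' : TModel, M'.len = M.len ∧
    (∀ p ∉ Q, ∀ n, (M'.V p n ↔ M.V p n)) ∧ LTL.sat M' 0 χ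

/-- A `ρ`-model: a finite temporal model in which every variable outside `ρ` is
everywhere false. -/
def IsRhoModel (ρ : Set ℕ) (M : TModel) : Prop :=
  ∀ p ∉ ρ, ∀ n, ¬ M.V p n

/-- The word over the alphabet `A_ρ = 2^ρ` corresponding to a `ρ`-model: its `i`-th
letter is `{p ∈ ρ : i ∈ V(p)}`. -/
def encode (ρ : Set ℕ) (M : TModel) : List {a : Set ℕ // a ⊆ ρ} :=
  (List.range (M.len + 1)).map (fun i => ⟨{p | p ∈ ρ ∧ M.V p i}, fun _ hp => hp.1⟩)

/-! ### FO(<)-definability of word languages -/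

/-- Relation symbols of the word signature `σ_A`: a unary predicate for each letter
`a ∈ A` and the binary predicate `<`. -/
def WordRel (A : Type) : ℕ → Type
  | 1 => A
  | 2 => Unit
  | _ => Empty

/-- The first-order signature `σ_A` of words over `A`. -/
def wordLang (A : Type) : FirstOrder.Language := ⟨fun _ => Empty, WordRel A⟩

/-- A word regarded as a first-order `σ_A`-structure on its set of positions. -/
def wordStructure {A : Type} (w : List A) : (wordLang A).Structure (Fin w.length) where
  funMap := fun f _ => Empty.elim f
  RelMap := fun {n} r =>
    match n, r with
    | 1, a => fun v => w.get (v 0) = a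
    | 2, _ => fun v => v 0 < v 1

/-- Truth of a `σ_A`-sentence in a word. -/
def SatWord {A : Type} (w : List A) (θ : (wordLang A).Sentence) : Prop :=
  letI := wordStructure w
  (Fin w.length) ⊨ θ

/-- A language `L ⊆ A⁺` is FO(<)-definable if it is the set of nonempty words
satisfying some `σ_A`-sentence. -/
def FODefinable {A : Type} (L : Set (List A)) : Prop :=
  ∃ θ : (wordLang A).Sentence, L = {w : List A | w ≠ [] ∧ SatWord w θ}


/-! ### Aperiodic recognizers -/

namespace Kamp

/-- Aperiodicity of a monoid, with a uniform exponent. -/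
def Aper (M : Type) [Monoid M] : Prop := ∃ n : ℕ, ∀ x : M, x ^ (n + 1) = x ^ n

theorem pow_stab {M : Type} [Monoid M] {n : ℕ} (h : ∀ x : M, x ^ (n + 1) = x ^ n)
    (x : M) (k : ℕ) (hk : n ≤ k) : x ^ (k + 1) = x ^ k := by
  obtain ⟨d, rfl⟩ := Nat.exists_eq_add_of_le hk
  rw [show n + d + 1 = (n + 1) + d by omega, pow_add, h, ← pow_add]

/-- Languages recognized by a finite aperiodic monoid. -/
def Rec {A : Type} (L : Set (List A)) : Prop :=
  ∃ (M : Type) (_ : Monoid M) (_ : Finite M) (f : A → M) (S : Set M),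
    Aper M ∧ ∀ w : List A, w ∈ L ↔ (w.map f).prod ∈ S

theorem Rec.compl {A : Type} {L : Set (List A)} (h : Rec L) : Rec Lᶜ := by
  obtain ⟨M, i, j, f, S, ha, hs⟩ := h
  exact ⟨M, i, j, f, Sᶜ, ha, fun w => by simp [hs]⟩

theorem Rec.empty {A : Type} : Rec (∅ : Set (List A)) :=
  ⟨Unit, inferInstance, inferInstance, fun _ => (), ∅, ⟨0, fun _ => rfl⟩, fun w => by simp⟩

theorem Rec.inter {A : Type} {K L : Set (List A)} (h : Rec K) (h' : Rec L) : Rec (K ∩ L) := by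
  obtain ⟨M, i, j, f, S, ⟨n, hn⟩, hs⟩ := h
  obtain ⟨M', i', j', f', S', ⟨n', hn'⟩, hs'⟩ := h'
  refine ⟨M × M', inferInstance, inferInstance, fun a => (f a, f' a), S ×ˢ S',
    ⟨max n n', fun x => ?_⟩, fun w => ?_⟩
  · ext
    · simpa using pow_stab hn x.1 _ (le_max_left _ _)
    · simpa using pow_stab hn' x.2 _ (le_max_right _ _)
  · have : (w.map (fun a => (f a, f' a))).prod = ((w.map f).prod, (w.map f').prod) := by
      induction w with
      | nil => rfl
      | cons a w ih => simp [ih]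
    rw [this]
    simp [hs, hs', Set.mem_inter_iff, Set.mem_prod]

/-- The monoid for the projection of one marker. -/
@[ext] structure Blk (M : Type) where
  m : M
  P : Set M

instance {M : Type} [Monoid M] : Monoid (Blk M) where
  mul a b := ⟨a.m * b.m, {x | (∃ p ∈ a.P, x = p * b.m) ∨ ∃ p ∈ b.P, x = a.m * p}⟩
  one := ⟨1, ∅⟩
  mul_assoc a b c := by
    apply Blk.ext
    · exact mul_assoc _ _ _
    · ext x
      change (∃ p ∈ {x | (∃ p ∈ a.P, x = p * b.m) ∨ ∃ p ∈ b.P, x = a.m * p}, x = p * c.m) ∨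
        (∃ p ∈ c.P, x = (a.m * b.m) * p) ↔ (∃ p ∈ a.P, x = p * (b.m * c.m)) ∨
        ∃ p ∈ {x | (∃ p ∈ b.P, x = p * c.m) ∨ ∃ p ∈ c.P, x = b.m * p}, x = a.m * p
      constructor
      · rintro (⟨p, (⟨q, hq, rfl⟩ | ⟨q, hq, rfl⟩), rfl⟩ | ⟨p, hp, rfl⟩)
        · exact Or.inl ⟨q, hq, mul_assoc _ _ _⟩
        · exact Or.inr ⟨q * c.m, Or.inl ⟨q, hq, rfl⟩, mul_assoc _ _ _⟩
        · exact Or.inr ⟨b.m * p, Or.inr ⟨p, hp, rfl⟩, mul_assoc _ _ _⟩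
      · rintro (⟨q, hq, rfl⟩ | ⟨p, (⟨q, hq, rfl⟩ | ⟨q, hq, rfl⟩), rfl⟩)
        · exact Or.inl ⟨q * b.m, Or.inl ⟨q, hq, rfl⟩, (mul_assoc _ _ _).symm⟩
        · exact Or.inl ⟨a.m * q, Or.inr ⟨q, hq, rfl⟩, (mul_assoc _ _ _).symm⟩
        · exact Or.inr ⟨q, hq, (mul_assoc _ _ _).symm⟩
  one_mul a := by
    apply Blk.ext
    · exact one_mul _
    · ext x
      change (∃ p ∈ (∅ : Set M), x = p * a.m) ∨ (∃ p ∈ a.P, x = 1 * p) ↔ _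
      simp
  mul_one a := by
    apply Blk.ext
    · exact mul_one _
    · ext x
      change (∃ p ∈ a.P, x = p * 1) ∨ (∃ p ∈ (∅ : Set M), x = a.m * p) ↔ _
      simp

theorem Blk.mul_m {M : Type} [Monoid M] (a b : Blk M) : (a * b).m = a.m * b.m := rfl
theorem Blk.one_m {M : Type} [Monoid M] : (1 : Blk M).m = 1 := rfl
theorem Blk.mul_P {M : Type} [Monoid M] (a b : Blk M) (x : M) :
    x ∈ (a * b).P ↔ (∃ p ∈ a.P, x = p * b.m) ∨ ∃ p ∈ b.P, x = a.m * p := Iff.rfl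
theorem Blk.one_P {M : Type} [Monoid M] (x : M) : x ∈ (1 : Blk M).P ↔ False := Iff.rfl

theorem Blk.pow_m {M : Type} [Monoid M] (a : Blk M) (n : ℕ) : (a ^ n).m = a.m ^ n := by
  induction n with
  | zero => simp [Blk.one_m]
  | succ n ih => rw [pow_succ, pow_succ, Blk.mul_m, ih]

theorem Blk.pow_P {M : Type} [Monoid M] (a : Blk M) (n : ℕ) (x : M) :
    x ∈ (a ^ n).P ↔ ∃ i j p, i + j + 1 = n ∧ p ∈ a.P ∧ x = a.m ^ i * p * a.m ^ j := by
  induction n generalizing x with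
  | zero => simp [Blk.one_P]
  | succ n ih =>
    rw [pow_succ, Blk.mul_P]
    constructor
    · rintro (⟨p, hp, rfl⟩ | ⟨p, hp, rfl⟩)
      · obtain ⟨i, j, q, rfl, hq, rfl⟩ := (ih p).1 hp
        exact ⟨i, j + 1, q, by omega, hq, by simp [pow_succ, mul_assoc]⟩
      · exact ⟨n, 0, p, by omega, hp, by simp [Blk.pow_m]⟩
    · rintro ⟨i, j, p, hij, hp, rfl⟩
      cases j with
      | zero =>
        obtain rfl : i = n := by omega
        exact Or.inr ⟨p, hp, by simp [Blk.pow_m]⟩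
      | succ j =>
        exact Or.inl ⟨a.m ^ i * p * a.m ^ j, (ih _).2 ⟨i, j, p, by omega, hp, rfl⟩,
          by simp [pow_succ, mul_assoc]⟩

theorem Blk.aper {M : Type} [Monoid M] (h : Aper M) : Aper (Blk M) := by
  obtain ⟨n, hn⟩ := h
  refine ⟨2 * n + 1, fun a => ?_⟩
  apply Blk.ext
  · rw [Blk.pow_m, Blk.pow_m]
    exact pow_stab hn _ _ (by omega)
  · ext x
    rw [Blk.pow_P, Blk.pow_P]
    constructor
    · rintro ⟨i, j, p, hij, hp, rfl⟩
      by_cases hi : n < i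
      · obtain ⟨i, rfl⟩ : ∃ k, i = k + 1 := ⟨i - 1, by omega⟩
        exact ⟨i, j, p, by omega, hp, by rw [pow_stab hn _ i (by omega)]⟩
      · obtain ⟨j, rfl⟩ : ∃ k, j = k + 1 := ⟨j - 1, by omega⟩
        exact ⟨i, j, p, by omega, hp, by rw [pow_stab hn _ j (by omega)]⟩
    · rintro ⟨i, j, p, hij, hp, rfl⟩
      by_cases hi : n ≤ i
      · exact ⟨i + 1, j, p, by omega, hp, by rw [pow_stab hn _ i (by omega)]⟩
      · exact ⟨i, j + 1, p, by omega, hp, by rw [pow_stab hn _ j (by omega)]⟩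

instance {M : Type} [Finite M] : Finite (Blk M) :=
  Finite.of_injective (fun a : Blk M => (a.m, a.P)) (by
    rintro ⟨a, b⟩ ⟨c, d⟩ h
    simpa using h)

/-- The product of the block images of the letters lists all products of words with
one marked position. -/
theorem Blk.prod_eq {A M : Type} [Monoid M] (f0 f1 : A → M) (w : List A) :
    (w.map (fun a => (⟨f0 a, {f1 a}⟩ : Blk M))).prod.m = (w.map f0).prod ∧
    ∀ x, x ∈ (w.map (fun a => (⟨f0 a, {f1 a}⟩ : Blk M))).prod.P ↔
      ∃ (i : ℕ) (hi : i < w.length), x = ((w.map f0).set i (f1 w[i])).prod := by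
  induction w with
  | nil => exact ⟨rfl, fun x => by simp [Blk.one_P]⟩
  | cons a w ih =>
    refine ⟨by simp [Blk.mul_m, ih.1], fun x => ?_⟩
    rw [List.map_cons, List.prod_cons, Blk.mul_P]
    constructor
    · rintro (⟨p, hp, rfl⟩ | ⟨p, hp, rfl⟩)
      · refine ⟨0, by simp, ?_⟩
        have : p = f1 a := hp
        simp [ih.1, this]
      · obtain ⟨i, hi, rfl⟩ := (ih.2 p).1 hp
        exact ⟨i + 1, by simpa using hi, by simp⟩
    · rintro ⟨i, hi, rfl⟩
      cases i with
      | zero => exact Or.inl ⟨f1 a, rfl, by simp [ih.1]⟩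
      | succ i =>
        exact Or.inr ⟨_, (ih.2 _).2 ⟨i, by simpa using hi, rfl⟩, by simp⟩

theorem Rec.ex {A M : Type} [Monoid M] [Finite M] (hM : Aper M) (f0 f1 : A → M) (S : Set M) :
    Rec {w : List A | ∃ (i : ℕ) (hi : i < w.length), ((w.map f0).set i (f1 w[i])).prod ∈ S} := by
  refine ⟨Blk M, inferInstance, inferInstance, fun a => ⟨f0 a, {f1 a}⟩,
    {b | ∃ x ∈ b.P, x ∈ S}, Blk.aper hM, fun w => ?_⟩
  have := (Blk.prod_eq f0 f1 w).2
  simp only [Set.mem_ofPred_eq]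
  constructor
  · rintro ⟨i, hi, h⟩
    exact ⟨_, (this _).2 ⟨i, hi, rfl⟩, h⟩
  · rintro ⟨x, hx, h⟩
    obtain ⟨i, hi, rfl⟩ := (this _).1 hx
    exact ⟨i, hi, h⟩

/-- A small monoid used for the atomic formulas. -/
@[ext] structure O3 where
  x : Prop
  y : Prop
  z : Prop

instance : Monoid O3 where
  mul a b := ⟨a.x ∨ b.x, a.y ∨ b.y, a.z ∨ b.z ∨ (a.x ∧ b.y)⟩
  one := ⟨False, False, False⟩
  mul_assoc a b c := by
    apply O3.ext
    · exact propext (or_assoc)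
    · exact propext (or_assoc)
    · change ((a.z ∨ b.z ∨ (a.x ∧ b.y)) ∨ c.z ∨ ((a.x ∨ b.x) ∧ c.y)) =
        (a.z ∨ (b.z ∨ c.z ∨ (b.x ∧ c.y)) ∨ (a.x ∧ (b.y ∨ c.y)))
      apply propext
      tauto
  one_mul a := by
    apply O3.ext
    · exact propext (iff_of_eq (false_or _))
    · exact propext (iff_of_eq (false_or _))
    · change (False ∨ a.z ∨ (False ∧ a.y)) = a.z
      simp
  mul_one a := by
    apply O3.ext
    · exact propext (iff_of_eq (or_false _))
    · exact propext (iff_of_eq (or_false _))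
    · change (a.z ∨ False ∨ (a.x ∧ False)) = a.z
      simp

theorem O3.mul_x (a b : O3) : (a * b).x = (a.x ∨ b.x) := rfl
theorem O3.mul_y (a b : O3) : (a * b).y = (a.y ∨ b.y) := rfl
theorem O3.mul_z (a b : O3) : (a * b).z = (a.z ∨ b.z ∨ (a.x ∧ b.y)) := rfl
theorem O3.one_x : (1 : O3).x = False := rfl
theorem O3.one_y : (1 : O3).y = False := rfl
theorem O3.one_z : (1 : O3).z = False := rfl

instance : Finite O3 :=
  Finite.of_injective (fun a : O3 => (a.x, a.y, a.z)) (by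
    rintro ⟨a, b, c⟩ ⟨d, e, f⟩ h
    simpa using h)

theorem O3.aper : Aper O3 := by
  refine ⟨2, fun a => ?_⟩
  apply O3.ext
  · simp only [pow_succ, pow_zero, O3.mul_x, O3.one_x]; apply propext; tauto
  · simp only [pow_succ, pow_zero, O3.mul_y, O3.one_y]; apply propext; tauto
  · simp only [pow_succ, pow_zero, O3.mul_x, O3.mul_z, O3.one_x, O3.one_z]
    apply propext; tauto

theorem O3.prod_eq {A : Type} (X Y : A → Prop) (w : List A) :
    ((w.map (fun a => (⟨X a, Y a, False⟩ : O3))).prod.x ↔ ∃ a ∈ w, X a) ∧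
    ((w.map (fun a => (⟨X a, Y a, False⟩ : O3))).prod.y ↔ ∃ a ∈ w, Y a) ∧
    ((w.map (fun a => (⟨X a, Y a, False⟩ : O3))).prod.z ↔
      ¬ w.Pairwise (fun a b => ¬ (X a ∧ Y b))) := by
  induction w with
  | nil => simp [O3.one_x, O3.one_y, O3.one_z]
  | cons a w ih =>
    obtain ⟨h1, h2, h3⟩ := ih
    refine ⟨?_, ?_, ?_⟩
    · simp [O3.mul_x, h1]
    · simp [O3.mul_y, h2]
    · simp only [List.map_cons, List.prod_cons, O3.mul_z, h2, h3, List.pairwise_cons, false_or]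
      by_cases hx : X a
      · simp only [hx, true_and, not_and_or, not_forall, not_not, exists_prop]
        exact or_comm
      · simp [hx]

theorem Rec.exists_mem {A : Type} (X : A → Prop) : Rec {w : List A | ∃ a ∈ w, X a} :=
  ⟨O3, inferInstance, inferInstance, fun a => ⟨X a, False, False⟩, {o | o.x}, O3.aper,
    fun w => (O3.prod_eq X (fun _ => False) w).1.symm⟩

theorem Rec.exists_lt {A : Type} (X Y : A → Prop) :
    Rec {w : List A | ¬ w.Pairwise (fun a b => ¬ (X a ∧ Y b))} :=
  ⟨O3, inferInstance, inferInstance, fun a => ⟨X a, Y a, False⟩, {o | o.z}, O3.aper,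
    fun w => (O3.prod_eq X Y w).2.2.symm⟩

/-! ### From FO to aperiodic recognizers -/

/-- The word `w` with the positions of the tuple `v` marked. -/
def mk {A : Type} {n : ℕ} (w : List A) (v : Fin n → Fin w.length) : List (A × Set (Fin n)) :=
  List.ofFn fun i => (w.get i, {j | v j = i})

/-- Truth of a bounded formula in a word. -/
def Rz {A : Type} {n : ℕ} (w : List A) (θ : (wordLang A).BoundedFormula Empty n)
    (v : Fin n → Fin w.length) : Prop :=
  @Language.BoundedFormula.Realize (wordLang A) (Fin w.length) (wordStructure w) Empty n θ
    default v

theorem term_eq {A : Type} {n : ℕ} (t : (wordLang A).Term (Empty ⊕ Fin n)) :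
    ∃ i, t = Language.Term.var (Sum.inr i) := by
  cases t with
  | var x =>
    cases x with
    | inl e => exact e.elim
    | inr i => exact ⟨i, rfl⟩
  | func f _ => exact Empty.elim f

theorem mk_snoc {A M : Type} {n : ℕ} (w : List A) (v : Fin n → Fin w.length)
    (x : Fin w.length) (f : A × Set (Fin (n + 1)) → M) (hx : x.1 < (mk w v).length) :
    (mk w (Fin.snoc v x : Fin (n + 1) → Fin w.length)).map f =
      ((mk w v).map (fun a => f (a.1, Fin.castSucc '' a.2))).set x.1
        ((fun a : A × Set (Fin n) => f (a.1, insert (Fin.last n) (Fin.castSucc '' a.2)))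
          (mk w v)[x.1]) := by
  apply List.ext_getElem
  · simp [mk]
  · intro i h1 h2
    have hi : i < w.length := by simpa [mk] using h1
    rw [List.getElem_set]
    split_ifs with h
    · subst h
      simp only [mk, List.getElem_map, List.getElem_ofFn]
      congr 2
      ext j
      induction j using Fin.lastCases with
      | last => simp
      | cast j => simp [Fin.castSucc_ne_last]
    · simp only [mk, List.getElem_map, List.getElem_ofFn]
      congr 2
      ext j
      induction j using Fin.lastCases with
      | last =>
        simp [Fin.castSucc_ne_last]
        intro h'
        exact h (by rw [h'])
      | cast j => simp

theorem FO_rec {A : Type} {n : ℕ} (θ : (wordLang A).BoundedFormula Empty n) :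
    ∃ L : Set (List (A × Set (Fin n))), Rec L ∧
      ∀ (w : List A) (v : Fin n → Fin w.length), mk w v ∈ L ↔ Rz w θ v := by
  induction θ with
  | falsum => exact ⟨∅, Rec.empty, fun w v => by simp [Rz, Language.BoundedFormula.Realize]⟩
  | @equal n t₁ t₂ =>
    obtain ⟨i, rfl⟩ := term_eq t₁
    obtain ⟨j, rfl⟩ := term_eq t₂
    refine ⟨_, Rec.exists_mem (fun a => i ∈ a.2 ∧ j ∈ a.2), fun w v => ?_⟩
    simp only [Rz, Language.BoundedFormula.Realize, Language.Term.realize, Sum.elim_inr,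
      Set.mem_ofPred_eq, mk, List.mem_ofFn]
    constructor
    · rintro ⟨_, ⟨k, rfl⟩, h1, h2⟩
      exact Eq.trans h1 h2.symm
    · intro h
      exact ⟨_, ⟨v i, rfl⟩, rfl, h.symm⟩
  | @rel n l R ts =>
    match l, R, ts with
    | 0, R, _ => exact Empty.elim R
    | 1, R, ts =>
      obtain ⟨i, hi⟩ := term_eq (ts 0)
      refine ⟨_, Rec.exists_mem (fun a => i ∈ a.2 ∧ a.1 = R), fun w v => ?_⟩
      have : Rz w (Language.BoundedFormula.rel R ts) v ↔ w.get (v i) = R := by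
        change w.get (@Language.Term.realize (wordLang A) _ (wordStructure w) _ _ (ts 0)) = R ↔ _
        rw [hi]
        rfl
      rw [this]
      simp only [Set.mem_ofPred_eq, mk, List.mem_ofFn]
      constructor
      · rintro ⟨_, ⟨k, rfl⟩, h1, h2⟩
        have h1 : v i = k := h1
        rw [h1]; exact h2
      · intro h
        exact ⟨_, ⟨v i, rfl⟩, rfl, h⟩
    | 2, R, ts =>
      obtain ⟨i, hi⟩ := term_eq (ts 0)
      obtain ⟨j, hj⟩ := term_eq (ts 1)
      refine ⟨_, Rec.exists_lt (fun a => i ∈ a.2) (fun a => j ∈ a.2), fun w v => ?_⟩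
      have : Rz w (Language.BoundedFormula.rel R ts) v ↔ v i < v j := by
        change (@Language.Term.realize (wordLang A) _ (wordStructure w) _ _ (ts 0)) <
          (@Language.Term.realize (wordLang A) _ (wordStructure w) _ _ (ts 1)) ↔ _
        rw [hi, hj]
        rfl
      rw [this]
      simp only [Set.mem_ofPred_eq, mk, List.pairwise_iff_getElem, List.getElem_ofFn,
        List.length_ofFn]
      constructor
      · intro h
        push Not at h
        obtain ⟨a, b, ha, hb, hab, h1, h2⟩ := h
        rw [h1, h2]
        exact hab
      · intro h h'
        exact h' (v i) (v j) (v i).2 (v j).2 h ⟨rfl, rfl⟩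
    | (l + 3), R, _ => exact Empty.elim R
  | imp θ₁ θ₂ ih₁ ih₂ =>
    obtain ⟨L₁, h₁, e₁⟩ := ih₁
    obtain ⟨L₂, h₂, e₂⟩ := ih₂
    refine ⟨_, (h₁.inter h₂.compl).compl, fun w v => ?_⟩
    have : Rz w (θ₁.imp θ₂) v ↔ (Rz w θ₁ v → Rz w θ₂ v) := Iff.rfl
    rw [this, ← e₁, ← e₂]
    simp
  | @all n θ ih =>
    obtain ⟨L, ⟨M, i1, i2, f, S, ha, hS⟩, e⟩ := ih
    refine ⟨_, (Rec.ex ha (fun a : A × Set (Fin n) => f (a.1, Fin.castSucc '' a.2))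
      (fun a => f (a.1, insert (Fin.last n) (Fin.castSucc '' a.2))) Sᶜ).compl, fun w v => ?_⟩
    have : Rz w θ.all v ↔ ∀ x, Rz w θ (Fin.snoc v x) := Iff.rfl
    rw [this]
    simp only [← e, hS, Set.mem_compl_iff, Set.mem_ofPred_eq, not_exists, not_not]
    constructor
    · intro h x
      have hx : x.1 < (mk w v).length := by simp [mk]
      rw [mk_snoc w v x f hx]
      exact h x.1 hx
    · intro h i hi
      have hi' : i < w.length := by simpa [mk] using hi
      have := h ⟨i, hi'⟩
      rw [mk_snoc w v ⟨i, hi'⟩ f hi] at this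
      exact this

theorem FO_sentence_rec {A : Type} (θ : (wordLang A).Sentence) :
    Rec {w : List A | SatWord w θ} := by
  obtain ⟨L, ⟨M, i1, i2, f, S, ha, hS⟩, e⟩ := FO_rec θ
  refine ⟨M, i1, i2, fun a => f (a, ∅), S, ha, fun w => ?_⟩
  have h := e w default
  have h2 : SatWord w θ ↔ Rz w θ default := Iff.rfl
  rw [Set.mem_ofPred_eq, h2, ← h, hS]
  have : mk w default = w.map (fun a => (a, (∅ : Set (Fin 0)))) := by
    apply List.ext_getElem
    · simp [mk]
    · intro i h1 h2
      simp only [mk, List.getElem_map, List.getElem_ofFn]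
      congr 1
      ext j
      exact j.elim0
  rw [this, List.map_map]
  rfl

/-! ### From aperiodic monoids to temporal logic (local divisors) -/

/-- Non-strict until on words; the empty suffix is an admissible end point. -/
def Unt {A : Type} (K L : Set (List A)) : List A → Prop
  | [] => [] ∈ L
  | a :: w => a :: w ∈ L ∨ (a :: w ∈ K ∧ Unt K L w)

/-- Languages definable in future temporal logic over the alphabet `A`. -/
inductive Df {A : Type} : Set (List A) → Prop
  | empty : Df ∅
  | head (a : A) : Df {w | ∃ v, w = a :: v}
  | compl {L : Set (List A)} : Df L → Df Lᶜ
  | inter {K L : Set (List A)} : Df K → Df L → Df (K ∩ L)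
  | next {L : Set (List A)} : Df L → Df {w | ∃ a v, w = a :: v ∧ v ∈ L}
  | untl {K L : Set (List A)} : Df K → Df L → Df {w | Unt K L w}

theorem Df.congr {A : Type} {K L : Set (List A)} (h : Df K) (e : ∀ w, w ∈ L ↔ w ∈ K) : Df L := by
  have : L = K := Set.ext e
  rw [this]
  exact h

theorem Df.union {A : Type} {K L : Set (List A)} (h : Df K) (h' : Df L) : Df (K ∪ L) :=
  (h.compl.inter h'.compl).compl.congr fun w => by simp; tauto

theorem Df.univ {A : Type} : Df (Set.univ : Set (List A)) :=
  Df.empty.compl.congr fun w => by simp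

theorem Df.bUnion {A ι : Type} (s : Finset ι) (L : ι → Set (List A)) (h : ∀ i ∈ s, Df (L i)) :
    Df {w | ∃ i ∈ s, w ∈ L i} := by
  classical
  induction s using Finset.induction_on with
  | empty => exact Df.empty.congr fun w => by simp
  | insert i s hi ih =>
    refine ((h i (by simp)).union (ih fun j hj => h j (by simp [hj]))).congr fun w => ?_
    simp

theorem Df.iUnion {A ι : Type} [Finite ι] (P : ι → Prop) (L : ι → Set (List A))
    (h : ∀ i, Df (L i)) : Df {w | ∃ i, P i ∧ w ∈ L i} := by
  classical
  have := Fintype.ofFinite ι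
  refine (Df.bUnion (Finset.univ.filter P) L fun i _ => h i).congr fun w => ?_
  simp

theorem Df.nil {A : Type} : Df ({[]} : Set (List A)) :=
  (Df.next Df.univ).compl.congr fun w => by cases w <;> simp

/-- Words over the subalphabet `B`. -/
def Star {A : Type} (B : Finset A) : Set (List A) := {w | ∀ a ∈ w, a ∈ B}

theorem Df.star {A : Type} (B : Finset A) : Df (Star B) := by
  refine (Df.untl (Df.bUnion B (fun a => {w | ∃ v, w = a :: v}) fun a _ => Df.head a)
    Df.nil).congr fun w => ?_
  induction w with
  | nil => simp [Star, Unt]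
  | cons a w ih =>
    have ih' : (∀ b ∈ w, b ∈ B) ↔ _ := ih
    simp only [Set.mem_ofPred_eq] at ih'
    simp [ih', Star, Unt, List.mem_cons]

/-- Words beginning with `c` followed by a word of `L`. -/
def Cc {A : Type} (c : A) (L : Set (List A)) : Set (List A) := {w | ∃ v, w = c :: v ∧ v ∈ L}

theorem Df.cc {A : Type} (c : A) {L : Set (List A)} (h : Df L) : Df (Cc c L) := by
  refine ((Df.head c).inter h.next).congr fun w => ?_
  cases w with
  | nil => simp [Cc]
  | cons a w => simp [Cc]

/-- The part before the first `c` exists and lies in `K`. -/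
def Pre {A : Type} (c : A) (K : Set (List A)) : Set (List A) :=
  {w | ∃ u v, w = u ++ c :: v ∧ c ∉ u ∧ u ∈ K}

/-- The part after the first `c` exists and lies in `K`. -/
def Fst {A : Type} (c : A) (K : Set (List A)) : Set (List A) :=
  {w | ∃ u v, w = u ++ c :: v ∧ c ∉ u ∧ v ∈ K}

/-- The part after some `c` lies in `K`. -/
def Lst {A : Type} (c : A) (K : Set (List A)) : Set (List A) :=
  {w | ∃ u v, w = u ++ c :: v ∧ v ∈ K}

theorem split_or {A : Type} (c : A) (w : List A) :
    c ∉ w ∨ ∃ u v, w = u ++ c :: v ∧ c ∉ u := by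
  by_cases h : c ∈ w
  · obtain ⟨u, v, h1, h2⟩ := List.eq_append_cons_of_mem h
    exact Or.inr ⟨u, v, h1, h2⟩
  · exact Or.inl h

theorem split_unique {A : Type} {c : A} {u v u' v' : List A} (h : u ++ c :: v = u' ++ c :: v')
    (hu : c ∉ u) (hu' : c ∉ u') : u = u' ∧ v = v' := by
  induction u generalizing u' with
  | nil =>
    cases u' with
    | nil => simpa using h
    | cons a u' => simp at h hu'; tauto
  | cons b u ih =>
    cases u' with
    | nil => simp at h hu; exact absurd h.1.symm hu.1
    | cons a u' =>
      simp only [List.cons_append, List.cons.injEq] at h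
      simp only [List.mem_cons, not_or] at hu hu'
      obtain ⟨h1, h2⟩ := ih h.2 hu.2 hu'.2
      exact ⟨by rw [h.1, h1], h2⟩

theorem split_unique_last {A : Type} {c : A} {u v u' v' : List A}
    (h : u ++ c :: v = u' ++ c :: v') (hu : c ∉ v) (hu' : c ∉ v') : u = u' ∧ v = v' := by
  have h2 := congrArg List.reverse h
  simp only [List.reverse_append, List.reverse_cons, List.append_assoc, List.singleton_append] at h2
  obtain ⟨h3, h4⟩ := split_unique h2 (by simpa using hu) (by simpa using hu')
  exact ⟨List.reverse_injective h4, List.reverse_injective h3⟩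

theorem mem_pre {A : Type} {c : A} {K : Set (List A)} {u : List A} (v : List A) (hu : c ∉ u) :
    u ++ c :: v ∈ Pre c K ↔ u ∈ K := by
  constructor
  · rintro ⟨u', v', h, h1, h2⟩
    rw [(split_unique h hu h1).1]
    exact h2
  · intro h
    exact ⟨u, v, rfl, hu, h⟩

theorem mem_fst {A : Type} {c : A} {K : Set (List A)} {u : List A} (v : List A) (hu : c ∉ u) :
    u ++ c :: v ∈ Fst c K ↔ v ∈ K := by
  constructor
  · rintro ⟨u', v', h, h1, h2⟩
    rw [(split_unique h hu h1).2]
    exact h2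
  · intro h
    exact ⟨u, v, rfl, hu, h⟩

theorem not_pre {A : Type} {c : A} {K : Set (List A)} {w : List A} (hu : c ∉ w) :
    w ∉ Pre c K := by
  rintro ⟨u, v, rfl, -, -⟩
  simp at hu

theorem not_fst {A : Type} {c : A} {K : Set (List A)} {w : List A} (hu : c ∉ w) :
    w ∉ Fst c K := by
  rintro ⟨u, v, rfl, -, -⟩
  simp at hu

theorem unt_skip {A : Type} {c : A} {K L : Set (List A)} {u : List A} (v : List A) (hu : c ∉ u)
    (hK : ∀ a w, a ≠ c → a :: w ∈ K) (hL : ∀ a w, a ≠ c → a :: w ∉ L) :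
    Unt K L (u ++ c :: v) ↔ Unt K L (c :: v) := by
  induction u with
  | nil => rfl
  | cons a u ih =>
    simp only [List.mem_cons, not_or] at hu
    have hac : a ≠ c := fun h => hu.1 h.symm
    simp only [List.cons_append]
    rw [Unt, ← ih hu.2]
    simp [hK a _ hac, hL a _ hac]

theorem unt_none {A : Type} {c : A} {K L : Set (List A)} {u : List A} (hu : c ∉ u)
    (h0 : [] ∉ L) (hL : ∀ a w, a ≠ c → c ∉ w → a :: w ∉ L) : ¬ Unt K L u := by
  induction u with
  | nil => exact h0
  | cons a u ih =>
    simp only [List.mem_cons, not_or] at hu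
    have hac : a ≠ c := fun h => hu.1 h.symm
    rw [Unt]
    simp [hL a u hac hu.2, ih hu.2]

theorem Df.fst {A : Type} (c : A) {L : Set (List A)} (h : Df L) : Df (Fst c L) := by
  refine (Df.untl (Df.head c).compl (h.cc c)).congr fun w => ?_
  rcases split_or c w with hc | ⟨u, v, rfl, hu⟩
  · refine iff_of_false (not_fst hc) ?_
    apply unt_none hc
    · simp [Cc]
    · intro a w ha _
      simp [Cc, ha]
  · rw [mem_fst v hu, Set.mem_ofPred_eq, unt_skip v hu]
    · simp [Unt, Cc]
    · intro a w ha
      simp [ha]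
    · intro a w ha
      simp [Cc, ha]

theorem Df.lst {A : Type} (c : A) {L : Set (List A)} (h : Df L) : Df (Lst c L) := by
  refine (Df.untl Df.univ (h.cc c)).congr fun w => ?_
  rw [Set.mem_ofPred_eq]
  induction w with
  | nil => simp [Lst, Unt, Cc]
  | cons a w ih =>
    rw [Unt, ← ih]
    constructor
    · rintro ⟨u, v, h1, h2⟩
      cases u with
      | nil => exact Or.inl ⟨v, h1, h2⟩
      | cons b u =>
        simp only [List.cons_append, List.cons.injEq] at h1
        exact Or.inr ⟨trivial, u, v, h1.2, h2⟩
    · rintro (⟨v, h1, h2⟩ | ⟨-, u, v, rfl, h2⟩)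
      · exact ⟨[], v, h1, h2⟩
      · exact ⟨a :: u, v, rfl, h2⟩

theorem Df.hasc {A : Type} (c : A) : Df {w : List A | c ∈ w} :=
  (Df.univ.lst c).congr fun w => by
    simp only [Lst, Set.mem_ofPred_eq, Set.mem_univ, and_true]
    exact List.mem_iff_append

theorem Df.pre {A : Type} (c : A) {K : Set (List A)} (h : Df K) : Df (Pre c K) := by
  induction h with
  | empty => exact Df.empty.congr fun w => by simp [Pre]
  | head a =>
    by_cases hac : a = c
    · subst hac
      refine Df.empty.congr fun w => iff_of_false ?_ (by simp)
      rintro ⟨u, v, rfl, hu, x, rfl⟩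
      simp at hu
    · refine ((Df.head a).inter (Df.hasc c)).congr fun w => ?_
      rcases split_or c w with hc | ⟨u, v, rfl, hu⟩
      · exact iff_of_false (not_pre hc) (fun h => hc h.2)
      · rw [mem_pre v hu]
        cases u with
        | nil => simp; intro h; exact absurd h.symm hac
        | cons b u => simp
  | compl _ ih =>
    refine (ih.compl.inter (Df.hasc c)).congr fun w => ?_
    rcases split_or c w with hc | ⟨u, v, rfl, hu⟩
    · exact iff_of_false (not_pre hc) (fun h => hc h.2)
    · rw [mem_pre v hu, Set.mem_inter_iff, Set.mem_compl_iff, Set.mem_compl_iff, mem_pre v hu]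
      simp
  | inter _ _ ih ih' =>
    refine (ih.inter ih').congr fun w => ?_
    rcases split_or c w with hc | ⟨u, v, rfl, hu⟩
    · exact iff_of_false (not_pre hc) (fun h => not_pre hc h.1)
    · rw [mem_pre v hu, Set.mem_inter_iff, Set.mem_inter_iff, mem_pre v hu, mem_pre v hu]
  | next _ ih =>
    refine ((Df.head c).compl.inter ih.next).congr fun w => ?_
    cases w with
    | nil => simp [Pre]
    | cons a w =>
      by_cases hac : a = c
      · subst hac
        refine iff_of_false ?_ (by simp)
        rw [← List.nil_append (a :: w), mem_pre w (by simp)]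
        simp
      · rcases split_or c w with hc | ⟨u, v, rfl, hu⟩
        · refine iff_of_false (not_pre (by simp [hc, Ne.symm hac])) ?_
          rintro ⟨-, b, v, h1, h2⟩
          simp only [List.cons.injEq] at h1
          exact not_pre hc (h1.2 ▸ h2)
        · rw [← List.cons_append, mem_pre v (by simp [hu, Ne.symm hac])]
          simp [hac, mem_pre v hu]
  | @untl K L _ _ ih ih' =>
    refine (Df.untl (ih.inter (Df.head c).compl) ih').congr fun w => ?_
    rcases split_or c w with hc | ⟨u, v, rfl, hu⟩
    · refine iff_of_false (not_pre hc) ?_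
      apply unt_none hc
      · exact not_pre (by simp)
      · intro a w h1 h2
        exact not_pre (by simp [h2, Ne.symm h1])
    · rw [mem_pre v hu]
      induction u with
      | nil =>
        have := @mem_pre A c L [] v (by simp)
        simp only [List.nil_append] at this
        simp [Unt, this]
      | cons a u ihu =>
        have h1 := @mem_pre A c L _ v hu
        have h2 := @mem_pre A c K _ v hu
        simp only [List.mem_cons, not_or] at hu
        have ihu := ihu hu.2
        simp only [Set.mem_ofPred_eq] at ihu
        simp only [List.cons_append] at h1 h2
        simp [Unt, ihu, h1, h2, Ne.symm hu.1]

/-- The sequence of values of the blocks between occurrences of `c` (the last block, not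
followed by `c`, is omitted). -/
def sg {A M : Type} [DecidableEq A] [Monoid M] (c : A) (f : A → M) (m : M) : List A → List M
  | [] => []
  | a :: w => if a = c then m :: sg c f 1 w else sg c f (m * f a) w

theorem sg_split {A M : Type} [DecidableEq A] [Monoid M] (c : A) (f : A → M) (m : M)
    (u v : List A) (hu : c ∉ u) :
    sg c f m (u ++ c :: v) = (m * (u.map f).prod) :: sg c f 1 v := by
  induction u generalizing m with
  | nil => simp [sg]
  | cons a u ih =>
    simp only [List.mem_cons, not_or] at hu
    simp [sg, Ne.symm hu.1, ih _ hu.2, mul_assoc]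

theorem sg_none {A M : Type} [DecidableEq A] [Monoid M] (c : A) (f : A → M) (m : M)
    (u : List A) (hu : c ∉ u) : sg c f m u = [] := by
  induction u generalizing m with
  | nil => simp [sg]
  | cons a u ih =>
    simp only [List.mem_cons, not_or] at hu
    simp [sg, Ne.symm hu.1, ih _ hu.2]

theorem star_erase {A : Type} [DecidableEq A] {B : Finset A} {c : A} {w : List A} :
    w ∈ Star (B.erase c) ↔ w ∈ Star B ∧ c ∉ w := by
  simp only [Star, Set.mem_ofPred_eq, Finset.mem_erase]
  constructor
  · intro h
    exact ⟨fun a ha => (h a ha).2, fun hc => (h c hc).1 rfl⟩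
  · rintro ⟨h1, h2⟩ a ha
    exact ⟨fun h => h2 (h ▸ ha), h1 a ha⟩

theorem star_append {A : Type} {B : Finset A} {c : A} {u v : List A}
    (h : u ++ c :: v ∈ Star B) : u ∈ Star B ∧ v ∈ Star B := by
  constructor
  · intro a ha
    exact h a (by simp [ha])
  · intro a ha
    exact h a (by simp [ha])

theorem Df.sig {A M : Type} [DecidableEq A] [Monoid M] (c : A) (f : A → M) (B : Finset A)
    (hT : ∀ t : M, Df {w | w ∈ Star (B.erase c) ∧ (w.map f).prod = t}) {Q : Set (List M)}
    (hQ : Df Q) : Df {w | w ∈ Star B ∧ sg c f 1 w ∈ Q} := by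
  induction hQ with
  | empty => exact Df.empty.congr fun w => by simp
  | head t =>
    refine ((Df.star B).inter ((hT t).pre c)).congr fun w => ?_
    refine and_congr_right fun hB => ?_
    rcases split_or c w with hc | ⟨u, v, rfl, hu⟩
    · refine iff_of_false ?_ (not_pre hc)
      simp [sg_none c f 1 w hc]
    · rw [mem_pre v hu, sg_split c f 1 u v hu]
      simp [star_erase, (star_append hB).1, hu]
  | compl _ ih =>
    refine ((Df.star B).inter ih.compl).congr fun w => ?_
    refine and_congr_right fun hB => ?_
    simp [hB]
  | inter _ _ ih ih' =>
    refine (ih.inter ih').congr fun w => ?_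
    simp only [Set.mem_ofPred_eq, Set.mem_inter_iff]
    tauto
  | next _ ih =>
    refine ((Df.star B).inter (ih.fst c)).congr fun w => ?_
    refine and_congr_right fun hB => ?_
    rcases split_or c w with hc | ⟨u, v, rfl, hu⟩
    · refine iff_of_false ?_ (not_fst hc)
      simp [sg_none c f 1 w hc]
    · rw [mem_fst v hu, sg_split c f 1 u v hu]
      simp [(star_append hB).2]
  | @untl K L _ _ ih ih' =>
    refine ((Df.star B).inter (ih'.union (ih.inter
      (Df.untl ((Df.head c).compl.union (ih.cc c)) (ih'.cc c))))).congr fun w => ?_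
    refine and_congr_right fun hB => ?_
    have key : ∀ n (w : List A), w.length ≤ n → w ∈ Star B → (Unt K L (sg c f 1 w) ↔
        sg c f 1 w ∈ L ∨ (sg c f 1 w ∈ K ∧
          Unt ({w | ∃ v, w = c :: v}ᶜ ∪ Cc c {w | w ∈ Star B ∧ sg c f 1 w ∈ K})
            (Cc c {w | w ∈ Star B ∧ sg c f 1 w ∈ L}) w)) := by
      intro n
      induction n with
      | zero =>
        intro w hw _
        obtain rfl : w = [] := by simpa using hw
        simp [sg, Unt, Cc]
      | succ n ihn =>
        intro w hw hB
        rcases split_or c w with hc | ⟨u, v, rfl, hu⟩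
        · rw [sg_none c f 1 w hc]
          have : ¬ Unt ({w | ∃ v, w = c :: v}ᶜ ∪ Cc c {w | w ∈ Star B ∧ sg c f 1 w ∈ K})
            (Cc c {w | w ∈ Star B ∧ sg c f 1 w ∈ L}) w := by
            apply unt_none hc
            · simp [Cc]
            · intro a w ha _
              simp [Cc, ha]
          simp [Unt, this]
        · have hv := (star_append hB).2
          rw [unt_skip v hu, sg_split c f 1 u v hu]
          · have hn := ihn v (by simp at hw; omega) hv
            simp only [Unt]
            rw [hn]
            simp [Cc, hv]
          · intro a w ha
            simp [ha]
          · intro a w ha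
            simp [Cc, ha]
    have := key w.length w le_rfl hB
    simp only [Set.mem_ofPred_eq, Set.mem_union, Set.mem_inter_iff, hB, true_and]
    exact this

/-- The local divisor of `M` at `c`. -/
@[ext] structure LD {M : Type} [Monoid M] (c : M) where
  val : M
  l : ∃ y, val = c * y
  r : ∃ z, val = z * c

theorem LD.aux {M : Type} [Monoid M] {c : M} (x y : LD c) (z z' : M) (h : x.val = z * c)
    (h' : x.val = z' * c) : z * y.val = z' * y.val := by
  obtain ⟨t, ht⟩ := y.l
  rw [ht, ← mul_assoc, ← mul_assoc, ← h, h']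

noncomputable instance {M : Type} [Monoid M] {c : M} : Mul (LD c) where
  mul x y := ⟨x.r.choose * y.val, by
    obtain ⟨t, ht⟩ := y.l
    obtain ⟨s, hs⟩ := x.l
    refine ⟨s * t, ?_⟩
    rw [ht, ← mul_assoc, ← x.r.choose_spec, hs, mul_assoc], by
    obtain ⟨t, ht⟩ := y.r
    exact ⟨x.r.choose * t, by rw [mul_assoc, ← ht]⟩⟩

theorem LD.mul_val {M : Type} [Monoid M] {c : M} (x y : LD c) (z : M) (h : x.val = z * c) :
    (x * y).val = z * y.val :=
  LD.aux x y _ _ x.r.choose_spec h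

noncomputable instance {M : Type} [Monoid M] {c : M} : Monoid (LD c) where
  one := ⟨c, ⟨1, by simp⟩, ⟨1, by simp⟩⟩
  mul_assoc x y k := by
    apply LD.ext
    obtain ⟨z, hz⟩ := x.r
    obtain ⟨z', hz'⟩ := y.r
    rw [LD.mul_val (x * y) k (z * z') (by rw [LD.mul_val x y z hz, hz', mul_assoc]),
      LD.mul_val x _ z hz, LD.mul_val y k z' hz', mul_assoc]
  one_mul x := by
    apply LD.ext
    rw [LD.mul_val _ x 1 (one_mul c).symm, one_mul]
  mul_one x := by
    apply LD.ext
    obtain ⟨z, hz⟩ := x.r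
    rw [LD.mul_val x _ z hz, hz]
    rfl

theorem LD.one_val {M : Type} [Monoid M] {c : M} : (1 : LD c).val = c := rfl

theorem LD.pow_val {M : Type} [Monoid M] {c : M} (x : LD c) (z : M) (h : x.val = z * c) (n : ℕ) :
    (x ^ n).val = z ^ n * c := by
  induction n with
  | zero => simp [LD.one_val]
  | succ n ih => rw [pow_succ', LD.mul_val x _ z h, ih, pow_succ', mul_assoc]

theorem LD.aper {M : Type} [Monoid M] {c : M} (h : Aper M) : Aper (LD c) := by
  obtain ⟨n, hn⟩ := h
  refine ⟨n, fun x => ?_⟩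
  obtain ⟨z, hz⟩ := x.r
  apply LD.ext
  rw [LD.pow_val x z hz, LD.pow_val x z hz, hn]

theorem LD.val_inj {M : Type} [Monoid M] {c : M} : Function.Injective (LD.val : LD c → M) :=
  fun _ _ h => LD.ext h

instance {M : Type} [Monoid M] [Finite M] {c : M} : Finite (LD c) :=
  Finite.of_injective _ LD.val_inj

theorem LD.card_lt {M : Type} [Monoid M] [Finite M] {c : M} (h : Aper M) (hc : c ≠ 1) :
    Nat.card (LD c) < Nat.card M := by
  have := Fintype.ofFinite M
  have := Fintype.ofFinite (LD c)
  rw [Nat.card_eq_fintype_card, Nat.card_eq_fintype_card]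
  refine Fintype.card_lt_of_injective_of_notMem LD.val LD.val_inj (b := 1) ?_
  rintro ⟨⟨x, ⟨y, hy⟩, hr⟩, h1⟩
  have h1 : x = 1 := h1
  rw [h1] at hy
  obtain ⟨n, hn⟩ := h
  have hp : ∀ k : ℕ, c ^ k * y ^ k = 1 := by
    intro k
    induction k with
    | zero => simp
    | succ k ih =>
      rw [pow_succ, pow_succ', mul_assoc, ← mul_assoc c, ← hy, one_mul, ih]
  apply hc
  have h3 := hp n
  rw [← hn, pow_succ', mul_assoc, hp n, mul_one] at h3
  exact h3

/-- The letter map into the local divisor. -/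
def ldg {M : Type} [Monoid M] (c t : M) : LD c :=
  ⟨c * t * c, ⟨t * c, mul_assoc _ _ _⟩, ⟨c * t, rfl⟩⟩

theorem ld_prod {A M : Type} [DecidableEq A] [Monoid M] (c : A) (f : A → M) (n : ℕ) (w : List A)
    (hn : w.length ≤ n) :
    ∃ u' v', c :: w = u' ++ c :: v' ∧ c ∉ v' ∧
      f c * (w.map f).prod =
        ((sg c f 1 w).map (ldg (f c))).prod.val * (v'.map f).prod := by
  induction n generalizing w with
  | zero =>
    obtain rfl : w = [] := by simpa using hn
    exact ⟨[], [], by simp, by simp, by simp [sg, LD.one_val]⟩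
  | succ n ih =>
    rcases split_or c w with hc | ⟨u, v, rfl, hu⟩
    · exact ⟨[], w, by simp, hc, by simp [sg_none c f 1 w hc, LD.one_val]⟩
    · obtain ⟨u', v', h1, h2, h3⟩ := ih v (by simp at hn; omega)
      refine ⟨c :: u ++ u', v', by simp [h1], h2, ?_⟩
      rw [sg_split c f 1 u v hu, List.map_cons, List.prod_cons,
        LD.mul_val _ _ (f c * (u.map f).prod) (by simp [ldg])]
      rw [mul_assoc, ← h3]
      simp [mul_assoc]

theorem aper_Df (k : ℕ) : ∀ (M : Type) [Monoid M] [Finite M], Nat.card M ≤ k → Aper M →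
    ∀ (A : Type) (f : A → M) (B : Finset A) (m : M),
      Df {w | w ∈ Star B ∧ (w.map f).prod = m} := by
  classical
  induction k with
  | zero =>
    intro M _ _ hM
    have := Nat.card_pos (α := M)
    omega
  | succ k ihk =>
    intro M _ _ hM ha A f B
    induction B using Finset.strongInduction with
    | H B ihB =>
    intro m
    by_cases hB : ∀ c ∈ B, f c = 1
    · have h1 : ∀ w ∈ Star B, (w.map f).prod = 1 := by
        intro w hw
        apply List.prod_eq_one
        intro x hx
        obtain ⟨a, h2, rfl⟩ := List.mem_map.1 hx
        exact hB a (hw a h2)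
      by_cases hm : m = 1
      · subst hm
        exact (Df.star B).congr fun w => ⟨fun h => h.1, fun h => ⟨h, h1 w h⟩⟩
      · refine Df.empty.congr fun w => iff_of_false ?_ (by simp)
        rintro ⟨h2, rfl⟩
        exact hm (h1 w h2)
    · push Not at hB
      obtain ⟨c, hcB, hc1⟩ := hB
      have hT := ihB (B.erase c) (Finset.erase_ssubset hcB)
      have hcard := LD.card_lt ha hc1
      have := Fintype.ofFinite M
      have hQ : ∀ y : LD (f c), Df {s : List M | (s.map (ldg (f c))).prod = y} := fun y =>
        (ihk (LD (f c)) (by omega) (LD.aper ha) M (ldg (f c)) Finset.univ y).congr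
          fun s => by simp [Star]
      refine ((hT m).union (Df.iUnion
        (fun p : M × LD (f c) × M => p.1 * p.2.1.val * p.2.2 = m)
        (fun p => (Star B ∩ Pre c {w | w ∈ Star (B.erase c) ∧ (w.map f).prod = p.1}) ∩
          (Fst c {w | w ∈ Star B ∧ sg c f 1 w ∈
              {s : List M | (s.map (ldg (f c))).prod = p.2.1}} ∩
            Lst c {w | w ∈ Star (B.erase c) ∧ (w.map f).prod = p.2.2}))
        fun p => (((Df.star B).inter ((hT _).pre c))).inter
          (((Df.sig c f B hT (hQ _)).fst c).inter ((hT _).lst c)))).congr fun w => ?_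
      constructor
      · rintro ⟨hw, hm⟩
        rcases split_or c w with hc | ⟨u, v, rfl, hu⟩
        · exact Or.inl ⟨star_erase.2 ⟨hw, hc⟩, hm⟩
        · right
          obtain ⟨u', v', h1, h2, h3⟩ := ld_prod c f _ v le_rfl
          have huv : u ++ c :: v = (u ++ u') ++ c :: v' := by simp [h1]
          refine ⟨((u.map f).prod, ((sg c f 1 v).map (ldg (f c))).prod, (v'.map f).prod),
            ?_, ⟨hw, ?_⟩, ?_, ?_⟩
          · simp only
            rw [mul_assoc, ← h3, ← hm]
            simp
          · rw [mem_pre v hu]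
            exact ⟨star_erase.2 ⟨(star_append hw).1, hu⟩, rfl⟩
          · rw [mem_fst v hu]
            exact ⟨(star_append hw).2, rfl⟩
          · refine ⟨u ++ u', v', huv, star_erase.2 ⟨?_, h2⟩, rfl⟩
            rw [huv] at hw
            exact (star_append hw).2
      · rintro (⟨h1, h2⟩ | ⟨⟨x, y, z⟩, hm, ⟨hw, hx⟩, hy, hz⟩)
        · exact ⟨(star_erase.1 h1).1, h2⟩
        · refine ⟨hw, ?_⟩
          rcases split_or c w with hc | ⟨u, v, rfl, hu⟩
          · exact absurd hx (not_pre hc)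
          · rw [mem_pre v hu] at hx
            rw [mem_fst v hu] at hy
            obtain ⟨u1, v1, e1, hv1, hz⟩ := hz
            obtain ⟨u', v', h1, h2, h3⟩ := ld_prod c f _ v le_rfl
            have huv : u ++ c :: v = (u ++ u') ++ c :: v' := by simp [h1]
            rw [huv] at e1
            obtain ⟨-, e2⟩ := split_unique_last e1 h2 (star_erase.1 hv1).2
            have hx2 : (u.map f).prod = x := hx.2
            have hy2 : ((sg c f 1 v).map (ldg (f c))).prod = y := hy.2
            have hz2 : (v1.map f).prod = z := hz
            simp only [List.map_append, List.map_cons, List.prod_append, List.prod_cons]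
            rw [h3, hx2, hy2, e2, hz2, ← hm, mul_assoc]

theorem Rec.df {A : Type} [Finite A] {L : Set (List A)} (h : Rec L) : Df L := by
  obtain ⟨M, i1, i2, f, S, ha, hS⟩ := h
  have := Fintype.ofFinite A
  refine (Df.iUnion (fun m => m ∈ S) (fun m => {w | w ∈ Star Finset.univ ∧ (w.map f).prod = m})
    fun m => aper_Df _ M le_rfl ha A f Finset.univ m).congr fun w => ?_
  rw [hS]
  simp [Star]

/-! ### LTL versus temporally definable languages -/

theorem sat_congr (χ : LTL) (M M' : TModel) (hl : M.len = M'.len)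
    (hV : ∀ p ∈ χ.vars, ∀ n, M.V p n ↔ M'.V p n) (n : ℕ) :
    LTL.sat M n χ ↔ LTL.sat M' n χ := by
  induction χ generalizing n with
  | top => exact Iff.rfl
  | var p => exact hV p rfl n
  | and a b iha ihb =>
    exact and_congr (iha (fun p hp => hV p (Or.inl hp)) n) (ihb (fun p hp => hV p (Or.inr hp)) n)
  | not a iha => exact not_congr (iha hV n)
  | next a iha => simp only [LTL.sat, hl, iha hV]
  | ev a iha => simp only [LTL.sat, hl, iha hV]
  | untl a b iha ihb =>
    simp only [LTL.sat, hl, iha (fun p hp => hV p (Or.inl hp)),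
      ihb (fun p hp => hV p (Or.inr hp))]

theorem vars_finite (χ : LTL) : χ.vars.Finite := by
  induction χ with
  | top => exact Set.finite_empty
  | var p => exact Set.finite_singleton p
  | and a b iha ihb => exact iha.union ihb
  | not a iha => exact iha
  | next a iha => exact iha
  | ev a iha => exact iha
  | untl a b iha ihb => exact iha.union ihb

/-- The `i`-th letter of the word of a model. -/
def ltr (ρ : Set ℕ) (M : TModel) (i : ℕ) : {a : Set ℕ // a ⊆ ρ} :=
  ⟨{p | p ∈ ρ ∧ M.V p i}, fun _ hp => hp.1⟩

theorem encode_length (ρ : Set ℕ) (M : TModel) : (encode ρ M).length = M.len + 1 := by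
  simp [encode]

theorem encode_get (ρ : Set ℕ) (M : TModel) (i : ℕ) (hi : i < (encode ρ M).length) :
    (encode ρ M)[i] = ltr ρ M i := by
  simp [encode, ltr]

theorem suf_cons (ρ : Set ℕ) (M : TModel) (n : ℕ) (hn : n ≤ M.len) :
    (encode ρ M).drop n = ltr ρ M n :: (encode ρ M).drop (n + 1) := by
  have h : n < (encode ρ M).length := by rw [encode_length]; omega
  rw [List.drop_eq_getElem_cons h, encode_get]

theorem suf_end (ρ : Set ℕ) (M : TModel) : (encode ρ M).drop (M.len + 1) = [] := by
  rw [List.drop_eq_nil_iff, encode_length]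

theorem encode_congr (ρ : Set ℕ) (M M' : TModel) (hl : M.len = M'.len)
    (hV : ∀ p ∈ ρ, ∀ n, M.V p n ↔ M'.V p n) : encode ρ M = encode ρ M' := by
  apply List.ext_getElem
  · simp [encode_length, hl]
  · intro i h1 h2
    rw [encode_get, encode_get]
    apply Subtype.ext
    ext p
    exact and_congr_right fun hp => hV p hp i

/-- Disjunction. -/
def lor (a b : LTL) : LTL := .not (.and (.not a) (.not b))

theorem sat_lor (M : TModel) (n : ℕ) (a b : LTL) :
    LTL.sat M n (lor a b) ↔ LTL.sat M n a ∨ LTL.sat M n b := by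
  simp only [lor, LTL.sat]
  tauto

theorem vars_lor (a b : LTL) : (lor a b).vars = a.vars ∪ b.vars := rfl

theorem unt_suf (ρ : Set ℕ) (M : TModel) (K L : Set (List {a : Set ℕ // a ⊆ ρ})) (d n : ℕ)
    (hd : n + d = M.len + 1) : Unt K L ((encode ρ M).drop n) ↔
      ∃ m, n ≤ m ∧ m ≤ M.len + 1 ∧ (encode ρ M).drop m ∈ L ∧
        ∀ k, n ≤ k → k < m → (encode ρ M).drop k ∈ K := by
  induction d generalizing n with
  | zero =>
    obtain rfl : n = M.len + 1 := by omega
    have hU : Unt K L ((encode ρ M).drop (M.len + 1)) ↔ (encode ρ M).drop (M.len + 1) ∈ L := by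
      rw [suf_end]
      rfl
    rw [hU]
    constructor
    · intro h
      exact ⟨_, le_rfl, le_rfl, h, fun k h1 h2 => by omega⟩
    · rintro ⟨m, h1, h2, h3, -⟩
      obtain rfl : m = M.len + 1 := by omega
      exact h3
  | succ d ih =>
    have hU : Unt K L ((encode ρ M).drop n) ↔ (encode ρ M).drop n ∈ L ∨
        ((encode ρ M).drop n ∈ K ∧ Unt K L ((encode ρ M).drop (n + 1))) := by
      rw [suf_cons ρ M n (by omega)]
      rfl
    rw [hU, ih (n + 1) (by omega)]
    constructor
    · rintro (h | ⟨h, m, h1, h2, h3, h4⟩)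
      · exact ⟨n, le_rfl, by omega, h, fun k h1 h2 => by omega⟩
      · refine ⟨m, by omega, h2, h3, fun k h5 h6 => ?_⟩
        rcases Nat.eq_or_lt_of_le h5 with rfl | h7
        · exact h
        · exact h4 k h7 h6
    · rintro ⟨m, h1, h2, h3, h4⟩
      rcases Nat.eq_or_lt_of_le h1 with rfl | h7
      · exact Or.inl h3
      · exact Or.inr ⟨h4 n le_rfl h7, m, h7, h2, h3, fun k h5 h6 => h4 k (by omega) h6⟩

theorem letter_LTL (ρ a : Set ℕ) (s : Finset ℕ) (hs : ∀ p ∈ s, p ∈ ρ) :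
    ∃ χ : LTL, χ.vars ⊆ ρ ∧ ∀ (M : TModel) (n : ℕ),
      LTL.sat M n χ ↔ ∀ p ∈ s, (M.V p n ↔ p ∈ a) := by
  classical
  induction s using Finset.induction_on with
  | empty => exact ⟨.top, by simp [LTL.vars], fun M n => by simp [LTL.sat]⟩
  | insert p s hp ih =>
    obtain ⟨χ, h1, h2⟩ := ih fun q hq => hs q (by simp [hq])
    have hpρ : p ∈ ρ := hs p (by simp)
    by_cases hpa : p ∈ a
    · refine ⟨.and (.var p) χ, ?_, fun M n => ?_⟩
      · simp [LTL.vars, h1, Set.insert_subset_iff, hpρ]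
      · simp [LTL.sat, h2, hpa]
    · refine ⟨.and (.not (.var p)) χ, ?_, fun M n => ?_⟩
      · simp [LTL.vars, h1, Set.insert_subset_iff, hpρ]
      · simp [LTL.sat, h2, hpa]

theorem Df_LTL {ρ : Set ℕ} (hρ : ρ.Finite) {L : Set (List {a : Set ℕ // a ⊆ ρ})} (h : Df L) :
    ∃ χ : LTL, χ.vars ⊆ ρ ∧ ∀ (M : TModel) (n : ℕ), n ≤ M.len →
      (LTL.sat M n χ ↔ (encode ρ M).drop n ∈ L) := by
  induction h with
  | empty => exact ⟨.not .top, by simp [LTL.vars], fun M n _ => by simp [LTL.sat]⟩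
  | head a =>
    obtain ⟨χ, h1, h2⟩ := letter_LTL ρ a.1 hρ.toFinset (by simp)
    refine ⟨χ, h1, fun M n hn => ?_⟩
    rw [h2, suf_cons ρ M n hn]
    have hh : (ltr ρ M n :: (encode ρ M).drop (n + 1) ∈ {w | ∃ v, w = a :: v}) ↔
        ltr ρ M n = a := by
      constructor
      · rintro ⟨v, hv⟩
        exact (List.cons.inj hv).1
      · intro e
        exact ⟨_, by rw [e]⟩
    rw [hh]
    simp only [Set.Finite.mem_toFinset]
    constructor
    · intro h
      refine Subtype.ext ?_
      ext p
      constructor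
      · rintro ⟨hp, hv⟩
        exact (h p hp).1 hv
      · intro hp
        exact ⟨a.2 hp, (h p (a.2 hp)).2 hp⟩
    · rintro rfl p hp
      simp [ltr, hp]
  | compl _ ih =>
    obtain ⟨χ, h1, h2⟩ := ih
    exact ⟨.not χ, h1, fun M n hn => not_congr (h2 M n hn)⟩
  | inter _ _ ih ih' =>
    obtain ⟨χ, h1, h2⟩ := ih
    obtain ⟨χ', h1', h2'⟩ := ih'
    exact ⟨.and χ χ', Set.union_subset h1 h1', fun M n hn =>
      and_congr (h2 M n hn) (h2' M n hn)⟩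
  | @next L _ ih =>
    obtain ⟨χ, h1, h2⟩ := ih
    have key : ∀ (M : TModel) (n : ℕ), n ≤ M.len →
        ((encode ρ M).drop n ∈ {w | ∃ a v, w = a :: v ∧ v ∈ L} ↔
          (encode ρ M).drop (n + 1) ∈ L) := by
      intro M n hn
      rw [suf_cons ρ M n hn]
      constructor
      · rintro ⟨a, v, h3, h4⟩
        rw [(List.cons.inj h3).2]
        exact h4
      · intro h3
        exact ⟨_, _, rfl, h3⟩
    by_cases h0 : [] ∈ L
    · refine ⟨.not (.next (.not χ)), h1, fun M n hn => ?_⟩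
      rw [key M n hn]
      simp only [LTL.sat, not_and, not_not]
      rcases Nat.eq_or_lt_of_le hn with rfl | hlt
      · rw [suf_end]
        simp [h0]
      · rw [h2 M (n + 1) hlt]
        simp [hlt]
    · refine ⟨.next χ, h1, fun M n hn => ?_⟩
      rw [key M n hn]
      simp only [LTL.sat]
      rcases Nat.eq_or_lt_of_le hn with rfl | hlt
      · rw [suf_end]
        simp [h0]
      · rw [h2 M (n + 1) hlt]
        simp [hlt]
  | @untl K L _ _ ihK ihL =>
    obtain ⟨κ, k1, k2⟩ := ihK
    obtain ⟨χ, h1, h2⟩ := ihL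
    have base : ∀ (M : TModel) (n : ℕ), n ≤ M.len →
        (LTL.sat M n (lor χ (.and κ (.untl χ κ))) ↔
          ∃ m, n ≤ m ∧ m ≤ M.len ∧ (encode ρ M).drop m ∈ L ∧
            ∀ k, n ≤ k → k < m → (encode ρ M).drop k ∈ K) := by
      intro M n hn
      rw [sat_lor]
      simp only [LTL.sat]
      constructor
      · rintro (h | ⟨h, m, h3, h4, h5, h6⟩)
        · exact ⟨n, le_rfl, hn, (h2 M n hn).1 h, fun k h1 h2 => by omega⟩
        · refine ⟨m, by omega, h4, (h2 M m h4).1 h5, fun k h7 h8 => ?_⟩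
          rcases Nat.eq_or_lt_of_le h7 with rfl | h9
          · exact (k2 M n hn).1 h
          · exact (k2 M k (by omega)).1 (h6 k h9 h8)
      · rintro ⟨m, h3, h4, h5, h6⟩
        rcases Nat.eq_or_lt_of_le h3 with rfl | h9
        · exact Or.inl ((h2 M n hn).2 h5)
        · exact Or.inr ⟨(k2 M n hn).2 (h6 n le_rfl h9), m, h9, h4, (h2 M m h4).2 h5,
            fun k h7 h8 => (k2 M k (by omega)).2 (h6 k (by omega) h8)⟩
    have bvars : (lor χ (.and κ (.untl χ κ))).vars ⊆ ρ := by
      simp [vars_lor, LTL.vars, h1, k1]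
    by_cases h0 : [] ∈ L
    · refine ⟨lor (lor χ (.and κ (.untl χ κ))) (.and κ (.not (.ev (.not κ)))), ?_,
        fun M n hn => ?_⟩
      · rw [vars_lor]
        refine Set.union_subset bvars ?_
        simp [LTL.vars, k1]
      · rw [sat_lor, base M n hn, Set.mem_ofPred_eq, unt_suf ρ M K L (M.len + 1 - n) n (by omega)]
        simp only [LTL.sat]
        constructor
        · rintro (⟨m, h3, h4, h5, h6⟩ | ⟨h3, h4⟩)
          · exact ⟨m, h3, by omega, h5, h6⟩
          · refine ⟨M.len + 1, by omega, le_rfl, by rw [suf_end]; exact h0, fun k h7 h8 => ?_⟩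
            rcases Nat.eq_or_lt_of_le h7 with rfl | h9
            · exact (k2 M n hn).1 h3
            · by_contra hk
              exact h4 ⟨k, h9, by omega, fun h => hk ((k2 M k (by omega)).1 h)⟩
        · rintro ⟨m, h3, h4, h5, h6⟩
          rcases Nat.eq_or_lt_of_le h4 with rfl | h9
          · right
            refine ⟨(k2 M n hn).2 (h6 n le_rfl (by omega)), ?_⟩
            rintro ⟨k, h7, h8, h10⟩
            exact h10 ((k2 M k h8).2 (h6 k (by omega) (by omega)))
          · exact Or.inl ⟨m, h3, by omega, h5, h6⟩
    · refine ⟨_, bvars, fun M n hn => ?_⟩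
      rw [base M n hn, Set.mem_ofPred_eq, unt_suf ρ M K L (M.len + 1 - n) n (by omega)]
      constructor
      · rintro ⟨m, h3, h4, h5, h6⟩
        exact ⟨m, h3, by omega, h5, h6⟩
      · rintro ⟨m, h3, h4, h5, h6⟩
        rcases Nat.eq_or_lt_of_le h4 with rfl | h9
        · rw [suf_end] at h5
          exact absurd h5 h0
        · exact ⟨m, h3, by omega, h5, h6⟩

/-! ### From LTL to FO -/

/-- The atom `x_i < x_j`. -/
def fLt (A : Type) {n : ℕ} (i j : Fin n) : (wordLang A).BoundedFormula Empty n :=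
  Language.BoundedFormula.rel (L := wordLang A) (l := 2) (R := ())
    ![Language.Term.var (Sum.inr i), Language.Term.var (Sum.inr j)]

/-- The atom `a(x_i)`. -/
def fLetter {A : Type} {n : ℕ} (a : A) (i : Fin n) : (wordLang A).BoundedFormula Empty n :=
  Language.BoundedFormula.rel (L := wordLang A) (l := 1) (R := a)
    ![Language.Term.var (Sum.inr i)]

theorem rz_lt {A : Type} {n : ℕ} (w : List A) (i j : Fin n) (v : Fin n → Fin w.length) :
    Rz w (fLt A i j) v ↔ v i < v j := Iff.rfl

theorem rz_letter {A : Type} {n : ℕ} (w : List A) (a : A) (i : Fin n)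
    (v : Fin n → Fin w.length) : Rz w (fLetter a i) v ↔ w.get (v i) = a := Iff.rfl

theorem rz_imp {A : Type} {n : ℕ} (w : List A) (θ η : (wordLang A).BoundedFormula Empty n)
    (v : Fin n → Fin w.length) : Rz w (θ.imp η) v ↔ (Rz w θ v → Rz w η v) := Iff.rfl

theorem rz_not {A : Type} {n : ℕ} (w : List A) (θ : (wordLang A).BoundedFormula Empty n)
    (v : Fin n → Fin w.length) : Rz w θ.not v ↔ ¬ Rz w θ v := Iff.rfl

theorem rz_all {A : Type} {n : ℕ} (w : List A) (θ : (wordLang A).BoundedFormula Empty (n + 1))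
    (v : Fin n → Fin w.length) : Rz w θ.all v ↔ ∀ x, Rz w θ (Fin.snoc v x) := Iff.rfl

/-- Conjunction. -/
def fAnd {A : Type} {n : ℕ} (θ η : (wordLang A).BoundedFormula Empty n) :
    (wordLang A).BoundedFormula Empty n := (θ.imp η.not).not

/-- Existential quantification. -/
def fEx {A : Type} {n : ℕ} (θ : (wordLang A).BoundedFormula Empty (n + 1)) :
    (wordLang A).BoundedFormula Empty n := θ.not.all.not

theorem rz_and {A : Type} {n : ℕ} (w : List A) (θ η : (wordLang A).BoundedFormula Empty n)
    (v : Fin n → Fin w.length) :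
    Rz w (fAnd θ η) v ↔ Rz w θ v ∧ Rz w η v := by
  rw [fAnd, rz_not, rz_imp, rz_not]
  tauto

theorem rz_ex {A : Type} {n : ℕ} (w : List A) (θ : (wordLang A).BoundedFormula Empty (n + 1))
    (v : Fin n → Fin w.length) : Rz w (fEx θ) v ↔ ∃ x, Rz w θ (Fin.snoc v x) := by
  rw [fEx, rz_not, rz_all]
  simp only [rz_not]
  push Not
  rfl

theorem pos_lt {ρ : Set ℕ} {M : TModel} (y : Fin (encode ρ M).length) : y.1 < M.len + 1 :=
  lt_of_lt_of_eq y.2 (encode_length ρ M)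

theorem lt_len {ρ : Set ℕ} {M : TModel} {k : ℕ} (h : k ≤ M.len) : k < (encode ρ M).length :=
  lt_of_lt_of_eq (Nat.lt_succ_of_le h) (encode_length ρ M).symm

theorem fo_letters {A : Type} (s : Finset A) (n : ℕ) (i : Fin n) :
    ∃ θ : (wordLang A).BoundedFormula Empty n, ∀ (w : List A) (v : Fin n → Fin w.length),
      Rz w θ v ↔ w.get (v i) ∈ s := by
  classical
  induction s using Finset.induction_on with
  | empty => exact ⟨.falsum, fun w v => by simp [Rz, Language.BoundedFormula.Realize]⟩
  | insert a s ha ih =>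
    obtain ⟨θ, h⟩ := ih
    refine ⟨(fLetter a i).not.imp θ, fun w v => ?_⟩
    rw [rz_imp, rz_not, rz_letter, h, Finset.mem_insert]
    tauto

theorem LTL_FO {ρ : Set ℕ} (hρ : ρ.Finite) (χ : LTL) (hχ : χ.vars ⊆ ρ) (n : ℕ) :
    ∃ θ : (wordLang {a : Set ℕ // a ⊆ ρ}).BoundedFormula Empty (n + 1),
      ∀ (M : TModel) (v : Fin (n + 1) → Fin (encode ρ M).length),
        Rz (encode ρ M) θ v ↔ LTL.sat M (v (Fin.last n)).1 χ := by
  classical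
  have hfin : Finite {a : Set ℕ // a ⊆ ρ} := hρ.finite_subsets
  have := Fintype.ofFinite {a : Set ℕ // a ⊆ ρ}
  induction χ generalizing n with
  | top => exact ⟨Language.BoundedFormula.falsum.not, fun M v =>
      iff_of_true (fun h => h) trivial⟩
  | var p =>
    obtain ⟨θ, h⟩ := fo_letters
      (Finset.univ.filter fun a : {a : Set ℕ // a ⊆ ρ} => p ∈ a.1) (n + 1) (Fin.last n)
    refine ⟨θ, fun M v => ?_⟩
    have hp : p ∈ ρ := hχ rfl
    rw [h, List.get_eq_getElem, encode_get]
    simp [ltr, LTL.sat, hp]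
  | and a b iha ihb =>
    obtain ⟨θ, h⟩ := iha (fun p hp => hχ (Or.inl hp)) n
    obtain ⟨η, h'⟩ := ihb (fun p hp => hχ (Or.inr hp)) n
    refine ⟨fAnd θ η, fun M v => ?_⟩
    rw [rz_and, h, h']
    rfl
  | not a iha =>
    obtain ⟨θ, h⟩ := iha hχ n
    exact ⟨θ.not, fun M v => not_congr (h M v)⟩
  | next a iha =>
    obtain ⟨θ, h⟩ := iha hχ (n + 1)
    -- there is `y > x` with nothing strictly in between and `θ(y)`
    refine ⟨fEx (fAnd (fLt _ (Fin.last n).castSucc (Fin.last (n + 1)))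
      (fAnd ((fLt _ (Fin.last n).castSucc.castSucc (Fin.last (n + 2))).imp
        (fLt _ (Fin.last (n + 2)) (Fin.last (n + 1)).castSucc).not).all θ)), fun M v => ?_⟩
    rw [rz_ex]
    simp only [rz_and, rz_all, rz_imp, rz_not, rz_lt, h, Fin.snoc_last, Fin.snoc_castSucc]
    simp only [LTL.sat]
    constructor
    · rintro ⟨y, h1, h2, h3⟩
      have hy := pos_lt y
      have h1 : (v (Fin.last n)).1 < y.1 := h1
      have hy1 : y.1 = (v (Fin.last n)).1 + 1 := by
        by_contra hne
        have hlt : (v (Fin.last n)).1 + 1 < y.1 := by omega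
        exact h2 ⟨(v (Fin.last n)).1 + 1, lt_len (by omega)⟩
          (by rw [Fin.lt_def]; simp) hlt
      exact ⟨by omega, hy1 ▸ h3⟩
    · rintro ⟨h1, h2⟩
      refine ⟨⟨(v (Fin.last n)).1 + 1, lt_len (by omega)⟩,
        by rw [Fin.lt_def]; simp, fun z h3 h4 => ?_, h2⟩
      rw [Fin.lt_def] at h3 h4
      simp only at h4
      omega
  | ev a iha =>
    obtain ⟨θ, h⟩ := iha hχ (n + 1)
    refine ⟨fEx (fAnd (fLt _ (Fin.last n).castSucc (Fin.last (n + 1))) θ),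
      fun M v => ?_⟩
    rw [rz_ex]
    simp only [rz_and, rz_lt, h, Fin.snoc_last, Fin.snoc_castSucc]
    simp only [LTL.sat]
    constructor
    · rintro ⟨y, h1, h2⟩
      have hy := pos_lt y
      exact ⟨y.1, h1, by omega, h2⟩
    · rintro ⟨m, h1, h2, h3⟩
      exact ⟨⟨m, lt_len (by omega)⟩, h1, h3⟩
  | untl a b iha ihb =>
    obtain ⟨θ, h⟩ := iha (fun p hp => hχ (Or.inl hp)) (n + 1)
    obtain ⟨η, h'⟩ := ihb (fun p hp => hχ (Or.inr hp)) (n + 2)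
    refine ⟨fEx (fAnd (fLt _ (Fin.last n).castSucc (Fin.last (n + 1)))
      (fAnd θ ((fLt _ (Fin.last n).castSucc.castSucc (Fin.last (n + 2))).imp
        ((fLt _ (Fin.last (n + 2)) (Fin.last (n + 1)).castSucc).imp η)).all)), fun M v => ?_⟩
    rw [rz_ex]
    simp only [rz_and, rz_all, rz_imp, rz_lt, h, h', Fin.snoc_last, Fin.snoc_castSucc]
    simp only [LTL.sat]
    constructor
    · rintro ⟨y, h1, h2, h3⟩
      have hy := pos_lt y
      exact ⟨y.1, h1, by omega, h2, fun k h4 h5 =>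
        h3 ⟨k, lt_len (by omega)⟩ h4 h5⟩
    · rintro ⟨m, h1, h2, h3, h4⟩
      exact ⟨⟨m, lt_len (by omega)⟩, h1, h3, fun z h5 h6 => h4 z.1 h5 h6⟩

theorem LTL_FO_sentence {ρ : Set ℕ} (hρ : ρ.Finite) (χ : LTL) (hχ : χ.vars ⊆ ρ) :
    ∃ θ : (wordLang {a : Set ℕ // a ⊆ ρ}).Sentence,
      ∀ M : TModel, SatWord (encode ρ M) θ ↔ LTL.sat M 0 χ := by
  obtain ⟨θ, h⟩ := LTL_FO hρ χ hχ 0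
  refine ⟨fEx (fAnd (fLt _ (Fin.last 1) (Fin.last 0).castSucc).not.all θ), fun M => ?_⟩
  have h2 : ∀ η : (wordLang {a : Set ℕ // a ⊆ ρ}).Sentence,
    SatWord (encode ρ M) η ↔ Rz (encode ρ M) η default := fun _ => Iff.rfl
  rw [h2, rz_ex]
  simp only [rz_and, rz_all, rz_not, rz_lt, h, Fin.snoc_last, Fin.snoc_castSucc]
  constructor
  · rintro ⟨x, h1, h3⟩
    have hx : x.1 = 0 := by
      by_contra hne
      exact h1 ⟨0, lt_len (by omega)⟩ (by rw [Fin.lt_def]; simp only; omega)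
    exact hx ▸ h3
  · intro h3
    exact ⟨⟨0, lt_len (by omega)⟩, fun z hz => by
      rw [Fin.lt_def] at hz; simp at hz, h3⟩

/-- A model of `φ` yields a member of the projected language. -/
theorem proj_mem {ρ : Set ℕ} (φ χ : LTL) (hv : χ.vars = φ.vars) (hφ : ρ ⊆ φ.vars) (M : TModel)
    (h : LTL.sat M 0 χ) : ∃ M₀ : TModel, IsRhoModel ρ M₀ ∧ SatEx (φ.vars \ ρ) M₀ χ ∧
      encode ρ M = encode ρ M₀ := by
  refine ⟨⟨M.len, fun p n => p ∈ ρ ∧ M.V p n⟩, fun p hp n hh => hp hh.1,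
    ⟨⟨M.len, fun p n => p ∈ φ.vars ∧ M.V p n⟩, rfl, ?_, ?_⟩, ?_⟩
  · intro p hp n
    simp only [Set.mem_sdiff, not_and, not_not] at hp
    exact and_congr_left fun _ => ⟨hp, fun h => hφ h⟩
  · refine (sat_congr χ M ⟨M.len, fun p n => p ∈ φ.vars ∧ M.V p n⟩ rfl ?_ 0).1 h
    intro p hp n
    rw [hv] at hp
    simp [hp]
  · refine encode_congr ρ _ _ rfl ?_
    intro p hp n
    simp [hp]

/-- A projected model comes from a model of the formula with the same word. -/
theorem proj_of {ρ Q : Set ℕ} (hQ : ∀ p ∈ ρ, p ∉ Q) (χ : LTL) (M : TModel)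
    (h : SatEx Q M χ) : ∃ M' : TModel, LTL.sat M' 0 χ ∧ encode ρ M' = encode ρ M := by
  obtain ⟨M', h1, h2, h3⟩ := h
  exact ⟨M', h3, encode_congr ρ _ _ h1 fun p hp n => h2 p (hQ p hp) n⟩

end Kamp

/-- Craig interpolant existence for LTL over finite timelines is equivalent to
FO(<)-separability of the regular languages `L_φ` and `L_¬ψ` over `A_ρ = 2^ρ`. -/
theorem LTL_interpolant_iff_FO_separable
    (φ ψ : LTL) (ρ : Set ℕ) (hρ : ρ = φ.vars ∩ ψ.vars)
    (Lφ Lψ : Set (List {a : Set ℕ // a ⊆ ρ}))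
    (hLφ : Lφ = {w | ∃ M : TModel, IsRhoModel ρ M ∧
      SatEx (φ.vars \ ρ) M φ ∧ w = encode ρ M})
    (hLψ : Lψ = {w | ∃ M : TModel, IsRhoModel ρ M ∧
      SatEx (ψ.vars \ ρ) M (LTL.not ψ) ∧ w = encode ρ M}) :
    (∃ χ : LTL, χ.vars ⊆ φ.vars ∩ ψ.vars ∧ LTLEntails φ χ ∧ LTLEntails χ ψ) ↔
      (∃ L : Set (List {a : Set ℕ // a ⊆ ρ}), FODefinable L ∧ Lφ ⊆ L ∧ Lψ ∩ L = ∅) := by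
  have hρf : ρ.Finite := hρ ▸ (Kamp.vars_finite φ).inter_of_left _
  have hρφ : ρ ⊆ φ.vars := hρ ▸ Set.inter_subset_left
  have hρψ : ρ ⊆ ψ.vars := hρ ▸ Set.inter_subset_right
  rw [← hρ]
  constructor
  · rintro ⟨χ, hχ, h1, h2⟩
    obtain ⟨θ, hθ⟩ := Kamp.LTL_FO_sentence hρf χ hχ
    refine ⟨{w | w ≠ [] ∧ SatWord w θ}, ⟨θ, rfl⟩, ?_, ?_⟩
    · rw [hLφ]
      rintro w ⟨M, -, hM, rfl⟩
      obtain ⟨M', h3, h4⟩ := Kamp.proj_of (fun p hp hq => hq.2 hp) φ M hM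
      refine ⟨?_, ?_⟩
      · rw [← List.length_pos_iff, Kamp.encode_length]
        omega
      · rw [← h4, hθ]
        exact h1 M' h3
    · rw [hLψ, Set.eq_empty_iff_forall_notMem]
      rintro w ⟨⟨M, -, hM, rfl⟩, -, hw⟩
      obtain ⟨M', h3, h4⟩ := Kamp.proj_of (fun p hp hq => hq.2 hp) (LTL.not ψ) M hM
      rw [← h4, hθ] at hw
      exact h3 (h2 M' hw)
  · rintro ⟨L, ⟨θ, rfl⟩, h1, h2⟩
    have hfin : Finite {a : Set ℕ // a ⊆ ρ} := hρf.finite_subsets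
    obtain ⟨χ, hχ, h3⟩ := Kamp.Df_LTL hρf (Kamp.FO_sentence_rec θ).df
    have h4 : ∀ M, LTL.sat M 0 χ ↔ SatWord (encode ρ M) θ := fun M => h3 M 0 (Nat.zero_le _)
    refine ⟨χ, hχ, fun M hM => ?_, fun M hM => ?_⟩
    · obtain ⟨M₀, h5, h6, h7⟩ := Kamp.proj_mem φ φ rfl hρφ M hM
      have : encode ρ M ∈ Lφ := by
        rw [hLφ]
        exact ⟨M₀, h5, h6, h7⟩
      exact (h4 M).2 (h1 this).2
    · by_contra hn
      obtain ⟨M₀, h5, h6, h7⟩ := Kamp.proj_mem ψ (LTL.not ψ) rfl hρψ M hn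
      have h8 : encode ρ M ∈ Lψ := by
        rw [hLψ]
        exact ⟨M₀, h5, h6, h7⟩
      rw [Set.eq_empty_iff_forall_notMem] at h2
      refine h2 _ ⟨h8, ?_, (h4 M).1 hM⟩
      rw [← List.length_pos_iff, Kamp.encode_length]
      omega
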